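/- Let (A, B) be a controllable pair of constant matrices with A ∈ ℝ^{n×n} and B ∈ ℝ^{n×p}, let H ≥ 0 be an integer, and let Σ₀, Σ₁ be symmetric positive definite n×n matrices. Let M, ν be of class C^{H+n−1} on [0,1] with M(t) symmetric positive semidefinite and ν(t) ≥ 0 on [0,1], and let U_i^0, U_i^1 ∈ ℝ^{n×p} for i ∈ {0, 1, …, H}. Then there exists U : [0,1] → ℝ^{n×p} of class C^H with U^{(i)}(0) = U_i^0 and U^{(i)}(1) = U_i^1 for all i ∈ {0, 1, …, H}, such that the solution of Σ'(t) = AΣ + ΣAᵀ + BU(t)ᵀ + U(t)Bᵀ + M(t) + 2ν(t)Σ with Σ(0) = Σ₀ satisfies Σ(t) ≻ 0 (symmetric positive definite) for all t ∈ [0,1] and Σ(1) = Σ₁. -/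

import Mathlib

/-!
Let `Ψ` be the inverse of the fundamental solution of `x' = (A + ν • 1) x`. In the coordinates
`X = Ψ Σ Ψᵀ` the drift disappears, and a control of the form `Uh + W` acts through the sum of a
fixed Hermitian path, which contains the contributions of `Uh` and `M`, and the response `Q` of the
drift-free equation `Q' = b Vᵀ + V bᵀ`, where `b t = exp (-t A) B` and `V` is a rescaling of `W`.
A smooth `Uh` carries the prescribed jets, and it remains to choose `V`, zero near the two
end points, with two tasks: `Q 1` must have the right value, and the path must stay positive
definite.

By controllability the weighted Gramian of `b` is invertible on every interval, so that there is a
smooth matrix control, supported in that interval, whose state `Z` in `Z' = b R` goes from `0` to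
`1`. The response `(Z D + D Zᵀ) / 2` ends at any given symmetric `D`, which settles the end value.
If `Z` goes up from `0` to `1` just after the initial time and down again just before the final
time, then `Z Zᵀ` is a positive semidefinite response with end value `0` which equals `1` in
between. Adding a large multiple of it makes the path positive definite there, while near the end
points positive definiteness holds by continuity.
-/

open Matrix

/-- The controllability matrix `[B AB A²B ⋯ A^{n−1}B]` of a constant pair `(A, B)`. -/
def ctrbConstMat {n p : ℕ} (A : Matrix (Fin n) (Fin n) ℝ) (B : Matrix (Fin n) (Fin p) ℝ) :
    Matrix (Fin n) (Fin n × Fin p) ℝ :=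
  Matrix.of fun i kj => (A ^ (kj.1 : ℕ) * B) i kj.2

/-! ### Two-point jets -/

section Jets

open scoped ContDiff

lemma exists_contDiff_iteratedDeriv_eq (N : ℕ) (x₀ : ℝ) (a : ℕ → ℝ) :
    ∃ f : ℝ → ℝ, ContDiff ℝ ∞ f ∧ ∀ k ≤ N, iteratedDeriv k f x₀ = a k := by
  let p : ℝ → ℝ := fun t => ∑ k ∈ Finset.range (N + 1), a k / k.factorial * t ^ k
  have iteratedDeriv_p (k : ℕ) (hk : k ≤ N) : iteratedDeriv k p 0 = a k := by
    rw [iteratedDeriv_fun_sum fun _ _ => by fun_prop]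
    simp only [iteratedDeriv_const_mul_field, iteratedDeriv_fun_pow_zero]
    rw [Finset.sum_eq_single_of_mem k (Finset.mem_range.2 (by lia))]
    · simp [k.factorial_ne_zero]
    · intro j _ hjk
      simp [hjk.symm]
  refine ⟨fun t => p (t - x₀), by fun_prop, fun k hk => ?_⟩
  simpa [iteratedDeriv_comp_sub_const] using iteratedDeriv_p k hk

lemma exists_contDiff_iteratedDeriv_eq_pair {x₀ x₁ : ℝ} (hx : x₀ ≠ x₁) (N : ℕ) (a b : ℕ → ℝ) :
    ∃ f : ℝ → ℝ, ContDiff ℝ ∞ f ∧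
      ∀ k ≤ N, iteratedDeriv k f x₀ = a k ∧ iteratedDeriv k f x₁ = b k := by
  obtain ⟨f, f_smooth, hf⟩ := exists_contDiff_iteratedDeriv_eq N x₀ a
  obtain ⟨g, g_smooth, hg⟩ := exists_contDiff_iteratedDeriv_eq N x₁ b
  have dist_pos : 0 < dist x₁ x₀ := dist_pos.2 hx.symm
  let φ : ContDiffBump x₀ := ⟨dist x₁ x₀ / 3, dist x₁ x₀ / 2, by positivity, by linarith⟩
  have φ_smooth : ContDiff ℝ ∞ φ := φ.contDiff
  refine ⟨fun t => φ t * f t + (1 - φ t) * g t, by fun_prop, fun k hk => ⟨?_, ?_⟩⟩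
  · rw [← hf k hk]
    refine Filter.EventuallyEq.iteratedDeriv_eq k ?_
    filter_upwards [φ.eventuallyEq_one] with t ht
    simp [ht]
  · rw [← hg k hk]
    refine Filter.EventuallyEq.iteratedDeriv_eq k ?_
    have far : ∀ᶠ t in nhds x₁, dist x₁ x₀ / 2 < dist t x₀ :=
      (continuous_id.dist continuous_const).continuousAt.eventually_const_lt (half_lt_self dist_pos)
    filter_upwards [far] with t ht
    simp [φ.zero_of_le_dist ht.le]

end Jets

/-! ### Openness of positive definiteness -/

section PosDef

open Set Filter Topology

variable {ι : Type*}

lemma posDef_of_forall_mem_sphere [Fintype ι] {P : Matrix ι ι ℝ} (hP : P.IsHermitian)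
    (h : ∀ x ∈ Metric.sphere (0 : ι → ℝ) 1, 0 < x ⬝ᵥ (P *ᵥ x)) : P.PosDef := by
  refine .of_dotProduct_mulVec_pos hP fun x hx => ?_
  have norm_pos : 0 < ‖x‖ := norm_pos_iff.2 hx
  have scaled := h (‖x‖⁻¹ • x) (by simp [norm_smul, norm_pos.ne'])
  simp only [mulVec_smul, dotProduct_smul, smul_dotProduct, smul_eq_mul] at scaled
  have inv_nonneg : 0 ≤ ‖x‖⁻¹ := by positivity
  simpa using pos_of_mul_pos_right (pos_of_mul_pos_right scaled inv_nonneg) inv_nonneg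

lemma eventually_posDef_of_isHermitian [Finite ι] {P : Matrix ι ι ℝ} (hP : P.PosDef) :
    ∀ᶠ Q in 𝓝 P, Q.IsHermitian → Q.PosDef := by
  cases nonempty_fintype ι
  have quadratic_continuous :
      Continuous fun q : Matrix ι ι ℝ × (ι → ℝ) => q.2 ⬝ᵥ (q.1 *ᵥ q.2) := by fun_prop
  have eventually_pos : ∀ᶠ Q in 𝓝 P, ∀ x ∈ Metric.sphere (0 : ι → ℝ) 1, 0 < x ⬝ᵥ (Q *ᵥ x) := by
    refine (isCompact_sphere 0 1).eventually_forall_of_forall_eventually fun x hx => ?_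
    have pos_at : 0 < x ⬝ᵥ (P *ᵥ x) := by
      simpa using hP.dotProduct_mulVec_pos (Metric.ne_of_mem_sphere hx one_ne_zero)
    exact quadratic_continuous.continuousAt.eventually_const_lt pos_at
  filter_upwards [eventually_pos] with Q hQ hQ_herm
  exact posDef_of_forall_mem_sphere hQ_herm hQ

-- `Q + s⁻¹ • 1` is a positive multiple of `1 + s • Q`, which tends to `1` as `s → 0`.
lemma exists_forall_posDef_add_smul_one [Finite ι] [DecidableEq ι]
    {K : Set (Matrix ι ι ℝ)} (hK : IsCompact K) (hK_herm : ∀ Q ∈ K, Q.IsHermitian) :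
    ∃ c : ℝ, 0 < c ∧ ∀ Q ∈ K, (Q + c • 1).PosDef := by
  have eventually_posDef : ∀ᶠ s : ℝ in 𝓝 0, ∀ Q ∈ K,
      (1 + s • Q).IsHermitian → (1 + s • Q).PosDef := by
    refine hK.eventually_forall_of_forall_eventually fun Q _ => ?_
    have limit : Tendsto (fun q : ℝ × Matrix ι ι ℝ => 1 + q.1 • q.2) (𝓝 (0, Q)) (𝓝 1) :=
      Continuous.tendsto' (by fun_prop) _ _ (by simp)
    exact limit.eventually (eventually_posDef_of_isHermitian PosDef.one)
  obtain ⟨s, hs, s_pos⟩ :=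
    ((eventually_posDef.filter_mono nhdsWithin_le_nhds).and self_mem_nhdsWithin).exists
      (f := 𝓝[>] (0 : ℝ))
  refine ⟨s⁻¹, inv_pos.2 s_pos, fun Q hQ => ?_⟩
  have scaled := (hs Q hQ (isHermitian_one.add ((hK_herm Q hQ).smul (.all s)))).smul
    (inv_pos.2 s_pos)
  rwa [smul_add, inv_smul_smul₀ (ne_of_gt s_pos), add_comm] at scaled

lemma exists_forall_posDef_of_notMem_Icc [Finite ι] {Y : ℝ → Matrix ι ι ℝ}
    (hY : ContinuousOn Y (Icc 0 1)) (Y_herm : ∀ t ∈ Icc 0 1, (Y t).IsHermitian)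
    (Y_zero : (Y 0).PosDef) (Y_one : (Y 1).PosDef) :
    ∃ ε : ℝ, 0 < ε ∧ ε < 1 ∧ ∀ t ∈ Icc 0 1, t ∉ Icc ε (1 - ε) → (Y t).PosDef := by
  have near {t₀ : ℝ} (ht₀ : t₀ ∈ Icc 0 1) (h : (Y t₀).PosDef) :
      ∃ δ > 0, ∀ t ∈ Icc 0 1, |t - t₀| < δ → (Y t).PosDef := by
    have eventually_posDef := (hY t₀ ht₀).eventually (eventually_posDef_of_isHermitian h)
    obtain ⟨δ, δ_pos, hδ⟩ := Metric.mem_nhdsWithin_iff.1 eventually_posDef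
    exact ⟨δ, δ_pos, fun t ht htδ => hδ ⟨htδ, ht⟩ (Y_herm t ht)⟩
  obtain ⟨δ₀, δ₀_pos, near_zero⟩ := near (by simp) Y_zero
  obtain ⟨δ₁, δ₁_pos, near_one⟩ := near (by simp) Y_one
  refine ⟨min (1 / 2) (min δ₀ δ₁), by positivity, by grind, fun t ht ht' => ?_⟩
  grind

end PosDef

/-! ### Calculus -/

section Calculus

open Set
open scoped ContDiff

variable {E : Type*} [NormedAddCommGroup E] [NormedSpace ℝ E] {a b : ℝ}

lemma exists_primitive_Icc [CompleteSpace E] {f : ℝ → E} (hf : ContinuousOn f (Icc a b)) (c : E) :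
    ∃ F : ℝ → E, F a = c ∧ ∀ t ∈ Icc a b, HasDerivWithinAt F (f t) (Icc a b) t := by
  refine ⟨fun t => c + ∫ s in a..t, f s, by simp, fun t ht => ?_⟩
  have : Fact (t ∈ Icc a b) := ⟨ht⟩
  refine (intervalIntegral.integral_hasDerivWithinAt_right ?_ ?_ (hf t ht)).const_add c
  · exact (hf.mono (Icc_subset_Icc_right ht.2)).intervalIntegrable_of_Icc ht.1
  · exact hf.stronglyMeasurableAtFilter_nhdsWithin measurableSet_Icc t

lemma eqOn_Icc_of_hasDerivWithinAt {f g f' : ℝ → E}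
    (hf : ∀ t ∈ Icc a b, HasDerivWithinAt f (f' t) (Icc a b) t)
    (hg : ∀ t ∈ Icc a b, HasDerivWithinAt g (f' t) (Icc a b) t) (h : f a = g a) :
    EqOn f g (Icc a b) := by
  refine eq_of_derivWithin_eq (fun t ht => (hf t ht).differentiableWithinAt)
    (fun t ht => (hg t ht).differentiableWithinAt) (fun t ht => ?_) h
  have uniqueDiff := uniqueDiffOn_Icc (ht.1.trans_lt ht.2) t (Ico_subset_Icc_self ht)
  rw [(hf t (Ico_subset_Icc_self ht)).derivWithin uniqueDiff,
    (hg t (Ico_subset_Icc_self ht)).derivWithin uniqueDiff]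

lemma contDiffOn_succ_of_hasDerivWithinAt {k : ℕ} {s : Set ℝ} {f f' : ℝ → E}
    (hs : UniqueDiffOn ℝ s) (hf : ∀ t ∈ s, HasDerivWithinAt f (f' t) s t)
    (hf' : ContDiffOn ℝ k f' s) : ContDiffOn ℝ (k + 1) f s :=
  (contDiffOn_succ_iff_derivWithin hs).2 ⟨fun t ht => (hf t ht).differentiableWithinAt, by simp,
    hf'.congr fun t ht => (hf t ht).derivWithin (hs t ht)⟩

lemma contDiff_infty_of_hasDerivAt {f f' : ℝ → E} (hf : ∀ t, HasDerivAt f (f' t) t)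
    (hf' : ContDiff ℝ ∞ f') : ContDiff ℝ ∞ f :=
  contDiff_infty_iff_deriv.2 ⟨fun t => (hf t).differentiableAt,
    by rwa [funext fun t => (hf t).deriv]⟩

end Calculus

section MatrixCalculus

open Set
open scoped ContDiff Matrix.Norms.Operator

variable {l m n : Type*} {s : Set ℝ} {t : ℝ}

@[fun_prop]
lemma contDiff_matrix_mul [Fintype l] [Fintype m] [Fintype n] {k : ℕ∞ω}
    {X : ℝ → Matrix l m ℝ} {Y : ℝ → Matrix m n ℝ} (hX : ContDiff ℝ k X) (hY : ContDiff ℝ k Y) :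
    ContDiff ℝ k fun t => X t * Y t := by
  have bilinear : IsBoundedBilinearMap ℝ fun P : Matrix l m ℝ × Matrix m n ℝ => P.1 * P.2 :=
    { add_left := Matrix.add_mul
      smul_left := Matrix.smul_mul
      add_right := Matrix.mul_add
      smul_right := fun c X Y => Matrix.mul_smul X c Y
      bound := ⟨1, one_pos, fun X Y => by simpa using linfty_opNorm_mul X Y⟩ }
  exact bilinear.contDiff.comp (hX.prodMk hY)

@[fun_prop]
lemma contDiff_matrix_transpose [Fintype m] [Fintype n] {k : ℕ∞ω} {X : ℝ → Matrix m n ℝ}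
    (hX : ContDiff ℝ k X) : ContDiff ℝ k fun t => (X t)ᵀ :=
  (transposeLinearEquiv m n ℝ ℝ).toLinearMap.toContinuousLinearMap.contDiff.comp hX

lemma contDiff_exp_smul [Fintype m] [DecidableEq m] {k : ℕ∞ω} (A : Matrix m m ℝ) :
    ContDiff ℝ k fun t : ℝ => NormedSpace.exp (t • A) :=
  (contDiff_iff_contDiffAt.2 fun X =>
    (NormedSpace.exp_analytic (𝕂 := ℝ) X).contDiffAt).comp (by fun_prop)

lemma hasDerivWithinAt_matrix_iff [Finite m] [Finite n] {X : ℝ → Matrix m n ℝ}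
    {X' : Matrix m n ℝ} :
    HasDerivWithinAt X X' s t ↔ ∀ i j, HasDerivWithinAt (fun τ => X τ i j) (X' i j) s t := by
  cases nonempty_fintype m
  cases nonempty_fintype n
  exact hasDerivWithinAt_pi.trans (forall_congr' fun _ => hasDerivWithinAt_pi)

lemma hasDerivWithinAt_matrix_mul [Finite l] [Fintype m] [Finite n]
    {X : ℝ → Matrix l m ℝ} {Y : ℝ → Matrix m n ℝ} {X' : Matrix l m ℝ} {Y' : Matrix m n ℝ}
    (hX : HasDerivWithinAt X X' s t) (hY : HasDerivWithinAt Y Y' s t) :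
    HasDerivWithinAt (fun τ => X τ * Y τ) (X' * Y t + X t * Y') s t := by
  rw [hasDerivWithinAt_matrix_iff] at *
  intro i j
  simp only [Matrix.mul_apply, Matrix.add_apply, ← Finset.sum_add_distrib]
  exact .fun_sum fun k _ => (hX i k).fun_mul (hY k j)

lemma hasDerivWithinAt_matrix_transpose [Finite m] [Finite n] {X : ℝ → Matrix m n ℝ}
    {X' : Matrix m n ℝ} (hX : HasDerivWithinAt X X' s t) :
    HasDerivWithinAt (fun τ => (X τ)ᵀ) X'ᵀ s t := by
  rw [hasDerivWithinAt_matrix_iff] at *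
  exact fun i j => hX j i

lemma isHermitian_of_hasDerivWithinAt [Finite m] {a b : ℝ} {X X' : ℝ → Matrix m m ℝ}
    (hX : ∀ t ∈ Icc a b, HasDerivWithinAt X (X' t) (Icc a b) t)
    (hX' : ∀ t ∈ Icc a b, (X' t).IsHermitian) (X_a : (X a).IsHermitian) {t : ℝ}
    (ht : t ∈ Icc a b) : (X t).IsHermitian := by
  cases nonempty_fintype m
  refine eqOn_Icc_of_hasDerivWithinAt (f := fun τ => (X τ)ᵀ) (fun τ hτ => ?_) hX X_a ht
  exact (hasDerivWithinAt_matrix_transpose (hX τ hτ)).congr_deriv (hX' τ hτ)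

lemma hasDerivAt_matrix_iff [Finite m] [Finite n] {X : ℝ → Matrix m n ℝ} {X' : Matrix m n ℝ} :
    HasDerivAt X X' t ↔ ∀ i j, HasDerivAt (fun τ => X τ i j) (X' i j) t := by
  cases nonempty_fintype m
  cases nonempty_fintype n
  exact hasDerivAt_pi.trans (forall_congr' fun _ => hasDerivAt_pi)

lemma hasDerivAt_matrix_mul [Finite l] [Fintype m] [Finite n]
    {X : ℝ → Matrix l m ℝ} {Y : ℝ → Matrix m n ℝ} {X' : Matrix l m ℝ} {Y' : Matrix m n ℝ}
    (hX : HasDerivAt X X' t) (hY : HasDerivAt Y Y' t) :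
    HasDerivAt (fun τ => X τ * Y τ) (X' * Y t + X t * Y') t := by
  cases nonempty_fintype l
  cases nonempty_fintype n
  exact hasDerivWithinAt_univ.1 (hasDerivWithinAt_matrix_mul hX.hasDerivWithinAt
    hY.hasDerivWithinAt)

lemma hasDerivAt_matrix_transpose [Finite m] [Finite n] {X : ℝ → Matrix m n ℝ}
    {X' : Matrix m n ℝ} (hX : HasDerivAt X X' t) : HasDerivAt (fun τ => (X τ)ᵀ) X'ᵀ t := by
  rw [hasDerivAt_matrix_iff] at *
  exact fun i j => hX j i

lemma hasDerivAt_vecMul [Fintype m] [Finite n] {X : ℝ → Matrix m n ℝ} {X' : Matrix m n ℝ}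
    (hX : HasDerivAt X X' t) (x : m → ℝ) : HasDerivAt (fun τ => x ᵥ* X τ) (x ᵥ* X') t := by
  cases nonempty_fintype n
  refine hasDerivAt_pi.2 fun j => ?_
  simp only [vecMul, dotProduct]
  exact .fun_sum fun i _ => (hasDerivAt_matrix_iff.1 hX i j).const_mul (x i)

lemma hasDerivAt_exp_smul_neg [Fintype m] [DecidableEq m] (A : Matrix m m ℝ) (t : ℝ) :
    HasDerivAt (fun τ : ℝ => NormedSpace.exp (τ • -A)) (-(NormedSpace.exp (t • -A) * A)) t :=
  (hasDerivAt_exp_smul_const (-A) t).congr_deriv (mul_neg _ _)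

end MatrixCalculus

/-! ### Steering the drift-free system -/

section Steering

open Set
open scoped ContDiff Matrix.Norms.Operator

variable {ι κ : Type*} [Fintype ι]

/-- Kalman's controllability condition for the pair `(A, B)` in dual form: the columns of all the
matrices `A ^ k * B` span the state space, i.e. only the zero covector annihilates them. -/
def KalmanControllable [DecidableEq ι] (A : Matrix ι ι ℝ) (B : Matrix ι κ ℝ) : Prop :=
  ∀ x : ι → ℝ, (∀ k : ℕ, x ᵥ* (A ^ k * B) = 0) → x = 0

lemma kalmanControllable_of_rank_ctrbConstMat {n p : ℕ} {A : Matrix (Fin n) (Fin n) ℝ}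
    {B : Matrix (Fin n) (Fin p) ℝ} (h : (ctrbConstMat A B).rank = n) :
    KalmanControllable A B := by
  intro x hx
  have rows_independent : LinearIndependent ℝ (ctrbConstMat A B).row := by
    rw [linearIndependent_iff_card_eq_finrank_span, Set.finrank, ← rank_eq_finrank_span_row, h,
      Fintype.card_fin]
  refine vecMul_injective_iff.2 rows_independent ?_
  ext ⟨k, j⟩
  exact (congrFun (hx k) j).trans (congrFun (zero_vecMul _) (k, j)).symm

/-- The system `x' = b u` is totally controllable if it is controllable on every nontrivial time
interval; in dual form, only the zero covector annihilates `b` on such an interval. -/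
def TotallyControllable (b : ℝ → Matrix ι κ ℝ) : Prop :=
  ∀ ⦃s t : ℝ⦄, s < t → ∀ x : ι → ℝ, (∀ τ ∈ Ioo s t, x ᵥ* b τ = 0) → x = 0

lemma KalmanControllable.totallyControllable_exp [Finite κ] [DecidableEq ι] {A : Matrix ι ι ℝ}
    {B : Matrix ι κ ℝ} (hAB : KalmanControllable A B) :
    TotallyControllable fun t => NormedSpace.exp (t • -A) * B := by
  cases nonempty_fintype κ
  intro s t hst x hx
  have annihilates (k : ℕ) : ∀ τ ∈ Ioo s t, x ᵥ* (NormedSpace.exp (τ • -A) * (A ^ k * B)) = 0 := by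
    induction k with
    | zero => simpa using hx
    | succ k ih =>
      intro τ hτ
      have derivative := hasDerivAt_vecMul
        (hasDerivAt_matrix_mul (hasDerivAt_exp_smul_neg A τ) (hasDerivAt_const τ (A ^ k * B))) x
      have locally_zero := (hasDerivAt_const τ (0 : κ → ℝ)).congr_of_eventuallyEq
        (Filter.eventually_of_mem (Ioo_mem_nhds hτ.1 hτ.2) ih)
      simpa [pow_succ', Matrix.mul_assoc, vecMul_neg] using derivative.unique locally_zero
  obtain ⟨τ, hτ⟩ := nonempty_Ioo.2 hst
  have exp_injective := vecMul_injective_of_isUnit (Matrix.isUnit_exp (τ • -A))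
  refine exp_injective ?_
  dsimp only
  rw [zero_vecMul]
  refine hAB _ fun k => ?_
  rw [vecMul_vecMul]
  exact annihilates k τ hτ

/-- The controllability Gramian of `x' = b u` on `[s, t]` with the weight `φ`. -/
noncomputable def weightedGramian [Fintype κ] (φ : ℝ → ℝ) (b : ℝ → Matrix ι κ ℝ) (s t : ℝ) :
    Matrix ι ι ℝ :=
  ∫ τ in s..t, φ τ • (b τ * (b τ)ᵀ)

variable [Fintype κ] {φ : ℝ → ℝ} {b : ℝ → Matrix ι κ ℝ} {s t : ℝ}

lemma hasDerivAt_weightedGramian (hφ : Continuous φ) (hb : Continuous b) (s t : ℝ) :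
    HasDerivAt (weightedGramian φ b s) (φ t • (b t * (b t)ᵀ)) t := by
  have integrand_continuous : Continuous fun τ => φ τ • (b τ * (b τ)ᵀ) := by fun_prop
  exact (integrand_continuous.integral_hasStrictDerivAt s t).hasDerivAt

lemma weightedGramian_eq_zero (h : ∀ τ ∈ uIcc s t, φ τ = 0) : weightedGramian φ b s t = 0 := by
  rw [weightedGramian, intervalIntegral.integral_congr (g := 0) fun τ hτ => by simp [h τ hτ]]
  simp

lemma weightedGramian_add (hφ : Continuous φ) (hb : Continuous b) (r s t : ℝ) :
    weightedGramian φ b r s + weightedGramian φ b s t = weightedGramian φ b r t := by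
  have integrand_continuous : Continuous fun τ => φ τ • (b τ * (b τ)ᵀ) := by fun_prop
  exact intervalIntegral.integral_add_adjacent_intervals
    (integrand_continuous.intervalIntegrable _ _) (integrand_continuous.intervalIntegrable _ _)

lemma dotProduct_weightedGramian_mulVec (hφ : Continuous φ) (hb : Continuous b) (s t : ℝ)
    (x : ι → ℝ) : x ⬝ᵥ (weightedGramian φ b s t *ᵥ x) =
      ∫ τ in s..t, φ τ * ((x ᵥ* b τ) ⬝ᵥ (x ᵥ* b τ)) := by
  let quadratic : Matrix ι ι ℝ →ₗ[ℝ] ℝ :=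
    { toFun := fun Q => x ⬝ᵥ (Q *ᵥ x)
      map_add' := fun P Q => by simp [add_mulVec]
      map_smul' := fun c Q => by simp [smul_mulVec] }
  have integrand_continuous : Continuous fun τ => φ τ • (b τ * (b τ)ᵀ) := by fun_prop
  have swap := quadratic.toContinuousLinearMap.intervalIntegral_comp_comm
    (integrand_continuous.intervalIntegrable (μ := MeasureTheory.volume) s t)
  refine swap.symm.trans (intervalIntegral.integral_congr fun τ _ => ?_)
  calc quadratic (φ τ • (b τ * (b τ)ᵀ)) = φ τ * (x ⬝ᵥ (b τ *ᵥ ((b τ)ᵀ *ᵥ x))) := by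
        simp [mulVec_mulVec, quadratic.map_smul, quadratic]
    _ = φ τ * ((x ᵥ* b τ) ⬝ᵥ (x ᵥ* b τ)) := by rw [dotProduct_mulVec, mulVec_transpose]

lemma TotallyControllable.isUnit_weightedGramian [DecidableEq ι] (hb : TotallyControllable b)
    (b_cont : Continuous b) (φ_cont : Continuous φ) (hst : s < t) (φ_nonneg : ∀ τ, 0 ≤ φ τ)
    (φ_pos : ∀ τ ∈ Ioo s t, 0 < φ τ) : IsUnit (weightedGramian φ b s t) := by
  have quadratic_pos (x : ι → ℝ) (hx : x ≠ 0) : 0 < x ⬝ᵥ (weightedGramian φ b s t *ᵥ x) := by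
    rw [dotProduct_weightedGramian_mulVec φ_cont b_cont]
    obtain ⟨τ, hτ, hxτ⟩ : ∃ τ ∈ Ioo s t, x ᵥ* b τ ≠ 0 := by
      by_contra! h
      exact hx (hb hst x h)
    refine intervalIntegral.integral_pos hst (by fun_prop) (fun τ _ => ?_)
      ⟨τ, Ioo_subset_Icc_self hτ, ?_⟩
    · exact mul_nonneg (φ_nonneg τ) (by simpa using dotProduct_star_self_nonneg (x ᵥ* b τ))
    · exact mul_pos (φ_pos τ hτ) (by simpa using dotProduct_star_self_pos_iff.2 hxτ)
  refine mulVec_injective_iff_isUnit.1 fun x y hxy => ?_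
  by_contra hne
  have pos := quadratic_pos (x - y) (sub_ne_zero.2 hne)
  rw [mulVec_sub, sub_eq_zero.2 hxy, dotProduct_zero] at pos
  exact pos.false

end Steering

section SteeringWindow

open Set
open scoped ContDiff Matrix.Norms.Operator

variable {ι κ : Type*} [Fintype ι] [Fintype κ] [DecidableEq ι]

/-- A matrix control `R` and a state `Z` of `Z' = b R` that steer from `0` to `1` during `[s, t]`:
for every vector `v`, the control `R v`, which is zero outside `(s, t)`, takes `x' = b u` from `0`
to `v`. -/
structure IsSteeringWindow (b : ℝ → Matrix ι κ ℝ) (s t : ℝ) (R : ℝ → Matrix κ ι ℝ)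
    (Z : ℝ → Matrix ι ι ℝ) : Prop where
  contDiff_control : ContDiff ℝ ∞ R
  hasDerivAt_state : ∀ τ, HasDerivAt Z (b τ * R τ) τ
  control_eq_zero : ∀ τ ∉ Ioo s t, R τ = 0
  state_eq_zero : ∀ τ ≤ s, Z τ = 0
  state_eq_one : ∀ τ ≥ t, Z τ = 1

lemma exists_contDiff_support_eq_Ioo {s t : ℝ} (hst : s < t) :
    ∃ φ : ℝ → ℝ, ContDiff ℝ ∞ φ ∧ (∀ τ, 0 ≤ φ τ) ∧ Function.support φ = Ioo s t := by
  let φ : ContDiffBump ((s + t) / 2) := ⟨(t - s) / 4, (t - s) / 2, by linarith, by linarith⟩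
  refine ⟨φ, φ.contDiff, fun τ => φ.nonneg, φ.support_eq.trans ?_⟩
  rw [Real.ball_eq_Ioo]
  congr 1 <;> ring

lemma TotallyControllable.exists_isSteeringWindow {b : ℝ → Matrix ι κ ℝ} {s t : ℝ}
    (hb : TotallyControllable b) (b_smooth : ContDiff ℝ ∞ b) (hst : s < t) :
    ∃ R Z, IsSteeringWindow b s t R Z := by
  obtain ⟨φ, φ_smooth, φ_nonneg, φ_support⟩ := exists_contDiff_support_eq_Ioo hst
  have φ_pos (τ : ℝ) (hτ : τ ∈ Ioo s t) : 0 < φ τ :=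
    (φ_nonneg τ).lt_of_ne' (Function.mem_support.1 (φ_support ▸ hτ))
  have φ_eq_zero (τ : ℝ) (hτ : τ ∉ Ioo s t) : φ τ = 0 :=
    Function.notMem_support.1 (φ_support ▸ hτ)
  let W := weightedGramian φ b s t
  have W_isUnit : IsUnit W :=
    hb.isUnit_weightedGramian b_smooth.continuous φ_smooth.continuous hst φ_nonneg φ_pos
  refine ⟨fun τ => φ τ • ((b τ)ᵀ * W⁻¹), fun τ => weightedGramian φ b s τ * W⁻¹,
    by fun_prop, fun τ => ?_, fun τ hτ => by simp [φ_eq_zero τ hτ], fun τ hτ => ?_, fun τ hτ => ?_⟩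
  · refine (hasDerivAt_matrix_mul (hasDerivAt_weightedGramian φ_smooth.continuous
      b_smooth.continuous s τ) (hasDerivAt_const τ W⁻¹)).congr_deriv ?_
    simp [Matrix.mul_assoc]
  · have before_window : weightedGramian φ b s τ = 0 := weightedGramian_eq_zero fun r hr =>
      φ_eq_zero r fun hr' => (uIcc_of_ge hτ ▸ hr).2.not_gt hr'.1
    simp [before_window]
  · have after_window : weightedGramian φ b t τ = 0 := weightedGramian_eq_zero fun r hr =>
      φ_eq_zero r fun hr' => (uIcc_of_le hτ ▸ hr).1.not_gt hr'.2
    rw [← weightedGramian_add φ_smooth.continuous b_smooth.continuous s t τ, after_window, add_zero]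
    exact mul_nonsing_inv W ((isUnit_iff_isUnit_det W).1 W_isUnit)

lemma IsSteeringWindow.eventually_control_eq_zero {b : ℝ → Matrix ι κ ℝ} {s t τ : ℝ}
    {R : ℝ → Matrix κ ι ℝ} {Z : ℝ → Matrix ι ι ℝ} (h : IsSteeringWindow b s t R Z)
    (hτ : τ ∉ Icc s t) : ∀ᶠ r in nhds τ, R r = 0 := by
  filter_upwards [isClosed_Icc.isOpen_compl.mem_nhds hτ] with r hr
  exact h.control_eq_zero r fun hr' => hr (Ioo_subset_Icc_self hr')

end SteeringWindow

/-! ### Covariance responses -/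

section CovarianceResponse

open Set Filter Topology
open scoped ContDiff Matrix.Norms.Operator

variable {ι κ : Type*} [Fintype ι] [Fintype κ] {b V V₁ V₂ : ℝ → Matrix ι κ ℝ}
  {Q Q₁ Q₂ : ℝ → Matrix ι ι ℝ}

/-- `Q` is the response, starting from `0`, of the drift-free covariance equation
`Q' = b Vᵀ + V bᵀ` to the smooth control `V`, which is switched off near the times `0` and `1`. -/
structure IsCovarianceResponse (b V : ℝ → Matrix ι κ ℝ) (Q : ℝ → Matrix ι ι ℝ) : Prop where
  contDiff_control : ContDiff ℝ ∞ V
  eventually_control_eq_zero_zero : ∀ᶠ t in 𝓝 0, V t = 0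
  eventually_control_eq_zero_one : ∀ᶠ t in 𝓝 1, V t = 0
  hasDerivAt : ∀ t, HasDerivAt Q (b t * (V t)ᵀ + V t * (b t)ᵀ) t
  initial : Q 0 = 0

namespace IsCovarianceResponse

lemma add (h₁ : IsCovarianceResponse b V₁ Q₁) (h₂ : IsCovarianceResponse b V₂ Q₂) :
    IsCovarianceResponse b (fun t => V₁ t + V₂ t) fun t => Q₁ t + Q₂ t where
  contDiff_control := h₁.contDiff_control.add h₂.contDiff_control
  eventually_control_eq_zero_zero := by
    filter_upwards [h₁.eventually_control_eq_zero_zero, h₂.eventually_control_eq_zero_zero]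
      with t ht₁ ht₂
    simp [ht₁, ht₂]
  eventually_control_eq_zero_one := by
    filter_upwards [h₁.eventually_control_eq_zero_one, h₂.eventually_control_eq_zero_one]
      with t ht₁ ht₂
    simp [ht₁, ht₂]
  hasDerivAt t := ((h₁.hasDerivAt t).add (h₂.hasDerivAt t)).congr_deriv (by
    rw [transpose_add, Matrix.mul_add, Matrix.add_mul]
    abel)
  initial := by simp [h₁.initial, h₂.initial]

lemma const_smul (h : IsCovarianceResponse b V Q) (c : ℝ) :
    IsCovarianceResponse b (fun t => c • V t) fun t => c • Q t where
  contDiff_control := h.contDiff_control.const_smul c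
  eventually_control_eq_zero_zero := by
    filter_upwards [h.eventually_control_eq_zero_zero] with t ht
    simp [ht]
  eventually_control_eq_zero_one := by
    filter_upwards [h.eventually_control_eq_zero_one] with t ht
    simp [ht]
  hasDerivAt t := ((h.hasDerivAt t).const_smul c).congr_deriv (by simp [smul_add])
  initial := by simp [h.initial]

lemma continuous (h : IsCovarianceResponse b V Q) : Continuous Q :=
  continuous_iff_continuousAt.2 fun t => (h.hasDerivAt t).continuousAt

lemma isHermitian (h : IsCovarianceResponse b V Q) {t : ℝ} (ht : t ∈ Icc 0 1) :
    (Q t).IsHermitian := by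
  refine isHermitian_of_hasDerivWithinAt (fun τ _ => (h.hasDerivAt τ).hasDerivWithinAt)
    (fun τ _ => ?_) (by simp [h.initial]) ht
  simp [IsHermitian, conjTranspose_eq_transpose_of_trivial, add_comm]

end IsCovarianceResponse

-- The product rule: `(Z Zᵀ)' = b (Z wᵀ)ᵀ + (Z wᵀ) bᵀ` as soon as `Z' = b w`.
lemma isCovarianceResponse_mul_transpose {w : ℝ → Matrix κ ι ℝ} {Z : ℝ → Matrix ι ι ℝ}
    (b_smooth : ContDiff ℝ ∞ b) (w_smooth : ContDiff ℝ ∞ w) (w_zero : ∀ᶠ t in 𝓝 0, w t = 0)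
    (w_one : ∀ᶠ t in 𝓝 1, w t = 0) (hZ : ∀ t, HasDerivAt Z (b t * w t) t) (Z_zero : Z 0 = 0) :
    IsCovarianceResponse b (fun t => Z t * (w t)ᵀ) fun t => Z t * (Z t)ᵀ where
  contDiff_control := by
    have Z_smooth : ContDiff ℝ ∞ Z := contDiff_infty_of_hasDerivAt hZ (by fun_prop)
    fun_prop
  eventually_control_eq_zero_zero := w_zero.mono fun t ht => by simp [ht]
  eventually_control_eq_zero_one := w_one.mono fun t ht => by simp [ht]
  hasDerivAt t := (hasDerivAt_matrix_mul (hZ t) (hasDerivAt_matrix_transpose (hZ t))).congr_deriv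
    (by simp [Matrix.mul_assoc])
  initial := by simp [Z_zero]

lemma TotallyControllable.exists_isCovarianceResponse_eq (hb : TotallyControllable b)
    (b_smooth : ContDiff ℝ ∞ b) {D : Matrix ι ι ℝ} (hD : D.IsHermitian) :
    ∃ V Q, IsCovarianceResponse b V Q ∧ Q 1 = D := by
  classical
  obtain ⟨R, Z, window⟩ :=
    hb.exists_isSteeringWindow b_smooth (show (1 / 3 : ℝ) < 2 / 3 by norm_num)
  have R_smooth := window.contDiff_control
  have D_symm : Dᵀ = D := hD
  refine ⟨fun t => (1 / 2 : ℝ) • (D * (R t)ᵀ), fun t => (1 / 2 : ℝ) • (Z t * D + D * (Z t)ᵀ),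
    { contDiff_control := by fun_prop
      eventually_control_eq_zero_zero :=
        (window.eventually_control_eq_zero (by norm_num)).mono fun t ht => by simp [ht]
      eventually_control_eq_zero_one :=
        (window.eventually_control_eq_zero (by norm_num)).mono fun t ht => by simp [ht]
      hasDerivAt := fun t => ?_
      initial := by simp [window.state_eq_zero 0 (by norm_num)] }, ?_⟩
  · have Z_deriv := window.hasDerivAt_state t
    refine (((hasDerivAt_matrix_mul Z_deriv (hasDerivAt_const t D)).add
      (hasDerivAt_matrix_mul (hasDerivAt_const t D)
        (hasDerivAt_matrix_transpose Z_deriv))).const_smul (1 / 2 : ℝ)).congr_deriv ?_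
    simp [D_symm, Matrix.mul_assoc]
  · dsimp only
    rw [window.state_eq_one 1 (by norm_num), transpose_one, Matrix.one_mul, Matrix.mul_one]
    module

lemma TotallyControllable.exists_isCovarianceResponse_plateau [DecidableEq ι]
    (hb : TotallyControllable b) (b_smooth : ContDiff ℝ ∞ b) {ε : ℝ} (ε_pos : 0 < ε)
    (ε_lt_one : ε < 1) :
    ∃ V Q, IsCovarianceResponse b V Q ∧ (∀ t, (Q t).PosSemidef) ∧ Q 1 = 0 ∧
      ∀ t ∈ Icc ε (1 - ε), Q t = 1 := by
  obtain ⟨R₁, Z₁, up⟩ := hb.exists_isSteeringWindow b_smooth (half_lt_self ε_pos)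
  obtain ⟨R₂, Z₂, down⟩ :=
    hb.exists_isSteeringWindow b_smooth (show 1 - ε < 1 - ε / 2 by linarith)
  have w_eventually_zero {t : ℝ} (h₁ : t ∉ Icc (ε / 2) ε) (h₂ : t ∉ Icc (1 - ε) (1 - ε / 2)) :
      ∀ᶠ τ in 𝓝 t, R₁ τ - R₂ τ = 0 := by
    filter_upwards [up.eventually_control_eq_zero h₁, down.eventually_control_eq_zero h₂]
      with τ hτ₁ hτ₂
    simp [hτ₁, hτ₂]
  refine ⟨_, _, isCovarianceResponse_mul_transpose (w := fun t => R₁ t - R₂ t)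
    (Z := fun t => Z₁ t - Z₂ t) b_smooth (up.contDiff_control.sub down.contDiff_control)
    (w_eventually_zero (by grind) (by grind)) (w_eventually_zero (by grind) (by grind))
    (fun t => ?_) ?_, fun t => posSemidef_self_mul_conjTranspose _, ?_, fun t ht => ?_⟩
  · exact ((up.hasDerivAt_state t).sub (down.hasDerivAt_state t)).congr_deriv
      (Matrix.mul_sub _ _ _).symm
  · simp [up.state_eq_zero 0 (by linarith), down.state_eq_zero 0 (by linarith)]
  · simp [up.state_eq_one 1 (by linarith), down.state_eq_one 1 (by linarith)]
  · simp [up.state_eq_one t ht.1, down.state_eq_zero t ht.2]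

lemma TotallyControllable.exists_isCovarianceResponse_posDef (hb : TotallyControllable b)
    (b_smooth : ContDiff ℝ ∞ b) {Y : ℝ → Matrix ι ι ℝ} (hY : ContinuousOn Y (Icc 0 1))
    (Y_herm : ∀ t ∈ Icc 0 1, (Y t).IsHermitian) (Y_zero : (Y 0).PosDef) (Y_one : (Y 1).PosDef) :
    ∃ V Q, IsCovarianceResponse b V Q ∧ Q 1 = 0 ∧ ∀ t ∈ Icc 0 1, (Y t + Q t).PosDef := by
  classical
  obtain ⟨ε, ε_pos, ε_lt_one, near_endpoints⟩ :=
    exists_forall_posDef_of_notMem_Icc hY Y_herm Y_zero Y_one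
  obtain ⟨c, c_pos, hc⟩ := exists_forall_posDef_add_smul_one
    (isCompact_Icc.image_of_continuousOn hY) (forall_mem_image.2 Y_herm)
  obtain ⟨V, Q, response, Q_posSemidef, Q_one, Q_plateau⟩ :=
    hb.exists_isCovarianceResponse_plateau b_smooth ε_pos ε_lt_one
  refine ⟨_, _, response.const_smul c, by simp [Q_one], fun t ht => ?_⟩
  by_cases ht' : t ∈ Icc ε (1 - ε)
  · simpa [Q_plateau t ht'] using hc _ (mem_image_of_mem Y ht)
  · exact (near_endpoints t ht ht').add_posSemidef ((Q_posSemidef t).smul c_pos.le)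

lemma TotallyControllable.exists_isCovarianceResponse_posDef_eq (hb : TotallyControllable b)
    (b_smooth : ContDiff ℝ ∞ b) {Y : ℝ → Matrix ι ι ℝ} (hY : ContinuousOn Y (Icc 0 1))
    (Y_herm : ∀ t ∈ Icc 0 1, (Y t).IsHermitian) (Y_zero : (Y 0).PosDef) {P : Matrix ι ι ℝ}
    (hP : P.PosDef) :
    ∃ V Q, IsCovarianceResponse b V Q ∧ Y 1 + Q 1 = P ∧ ∀ t ∈ Icc 0 1, (Y t + Q t).PosDef := by
  obtain ⟨V₁, Q₁, response₁, Q₁_one⟩ := hb.exists_isCovarianceResponse_eq b_smooth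
    (hP.isHermitian.sub (Y_herm 1 (by simp)))
  have corrected_one : Y 1 + Q₁ 1 = P := by rw [Q₁_one, add_sub_cancel]
  obtain ⟨V₂, Q₂, response₂, Q₂_one, posDef⟩ := hb.exists_isCovarianceResponse_posDef b_smooth
    (Y := fun t => Y t + Q₁ t) (hY.add response₁.continuous.continuousOn)
    (fun t ht => (Y_herm t ht).add (response₁.isHermitian ht))
    (by simpa [response₁.initial] using Y_zero) (corrected_one ▸ hP)
  exact ⟨_, _, response₁.add response₂, by simp [Q₂_one, corrected_one],
    fun t ht => by simpa [add_assoc] using posDef t ht⟩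

end CovarianceResponse

/-! ### The covariance equation -/

section CovarianceEquation

open Set Filter Topology
open scoped ContDiff Matrix.Norms.Operator

variable {ι κ : Type*} [Fintype ι] {A : Matrix ι ι ℝ} {M S : ℝ → Matrix ι ι ℝ} {l ν : ℝ → ℝ}
  {t : ℝ}

/-- The equation `Σ' = A Σ + Σ Aᵀ + B Uᵀ + U Bᵀ + M + 2 ν Σ` on `[0, 1]`, with one-sided
derivatives at the end points. -/
def IsCovarianceTrajectory [Fintype κ] (A : Matrix ι ι ℝ) (B : Matrix ι κ ℝ) (M : ℝ → Matrix ι ι ℝ)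
    (ν : ℝ → ℝ) (U : ℝ → Matrix ι κ ℝ) (S : ℝ → Matrix ι ι ℝ) : Prop :=
  ∀ t ∈ Icc (0 : ℝ) 1, HasDerivWithinAt S
    (A * S t + S t * Aᵀ + B * (U t)ᵀ + U t * Bᵀ + M t + (2 * ν t) • S t) (Icc 0 1) t

lemma hasDerivWithinAt_conj_of_drift {s : Set ℝ} {Ψ : ℝ → Matrix ι ι ℝ} {C G : Matrix ι ι ℝ}
    (hΨ : HasDerivWithinAt Ψ (-(Ψ t * C)) s t)
    (hS : HasDerivWithinAt S (C * S t + S t * Cᵀ + G) s t) :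
    HasDerivWithinAt (fun τ => Ψ τ * S τ * (Ψ τ)ᵀ) (Ψ t * G * (Ψ t)ᵀ) s t := by
  refine (hasDerivWithinAt_matrix_mul (hasDerivWithinAt_matrix_mul hΨ hS)
    (hasDerivWithinAt_matrix_transpose hΨ)).congr_deriv ?_
  simp only [transpose_neg, transpose_mul]
  noncomm_ring

variable [DecidableEq ι]

/-- The inverse of the fundamental solution `exp (l t) • exp (t • A)` of `x' = (A + ν • 1) x`, where
`l` is a primitive of `ν`. -/
noncomputable def inverseFlow (A : Matrix ι ι ℝ) (l : ℝ → ℝ) (t : ℝ) : Matrix ι ι ℝ :=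
  Real.exp (-l t) • NormedSpace.exp (t • -A)

lemma isUnit_inverseFlow : IsUnit (inverseFlow A l t) :=
  (Matrix.isUnit_exp _).smul (Units.mk0 _ (Real.exp_pos (-l t)).ne')

lemma hasDerivWithinAt_inverseFlow {s : Set ℝ} (hl : HasDerivWithinAt l (ν t) s t) :
    HasDerivWithinAt (inverseFlow A l) (-(inverseFlow A l t * (A + ν t • 1))) s t := by
  refine (hl.fun_neg.exp.smul (hasDerivAt_exp_smul_neg A t).hasDerivWithinAt).congr_deriv ?_
  simp [inverseFlow, Matrix.mul_add]
  module

/-- The control of the covariance equation that acts as the control `V` on the drift-free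
equation. -/
noncomputable def controlOfDriftFree (A : Matrix ι ι ℝ) (l : ℝ → ℝ) (V : ℝ → Matrix ι κ ℝ)
    (t : ℝ) : Matrix ι κ ℝ :=
  Real.exp (2 * l t) • (NormedSpace.exp (t • A) * V t)

lemma inverseFlow_mul_controlOfDriftFree (V : ℝ → Matrix ι κ ℝ) :
    inverseFlow A l t * controlOfDriftFree A l V t = Real.exp (l t) • V t := by
  have exp_inverse : NormedSpace.exp (t • -A) * NormedSpace.exp (t • A) = 1 := by
    rw [smul_neg, ← Matrix.exp_add_of_commute _ _ (Commute.refl (t • A)).neg_left, neg_add_cancel,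
      NormedSpace.exp_zero]
  rw [inverseFlow, controlOfDriftFree, Matrix.smul_mul, Matrix.mul_smul, smul_smul,
    ← Matrix.mul_assoc, exp_inverse, Matrix.one_mul, ← Real.exp_add]
  ring_nf

variable [Fintype κ] {B : Matrix ι κ ℝ} {U V : ℝ → Matrix ι κ ℝ}

lemma IsCovarianceTrajectory.hasDerivWithinAt_conj (hS : IsCovarianceTrajectory A B M ν U S)
    (hl : HasDerivWithinAt l (ν t) (Icc 0 1) t) (ht : t ∈ Icc (0 : ℝ) 1) :
    HasDerivWithinAt (fun τ => inverseFlow A l τ * S τ * (inverseFlow A l τ)ᵀ)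
      (inverseFlow A l t * (B * (U t)ᵀ + U t * Bᵀ + M t) * (inverseFlow A l t)ᵀ) (Icc 0 1) t := by
  refine hasDerivWithinAt_conj_of_drift (hasDerivWithinAt_inverseFlow hl)
    ((hS t ht).congr_deriv ?_)
  simp only [transpose_add, transpose_smul, transpose_one, Matrix.add_mul, Matrix.mul_add,
    Matrix.smul_mul, Matrix.mul_smul, Matrix.one_mul, Matrix.mul_one]
  module

lemma contDiffOn_controlOfDriftFree {k : ℕ} {s : Set ℝ} (hl : ContDiffOn ℝ k l s)
    (hV : ContDiff ℝ ∞ V) : ContDiffOn ℝ k (controlOfDriftFree A l V) s := by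
  have flow_smooth : ContDiff ℝ k fun t => NormedSpace.exp (t • A) * V t :=
    contDiff_matrix_mul (contDiff_exp_smul A) (hV.of_le (by exact_mod_cast le_top))
  exact (contDiffOn_const.mul hl).exp.smul flow_smooth.contDiffOn

lemma conj_controlOfDriftFree (A : Matrix ι ι ℝ) (B : Matrix ι κ ℝ) (l : ℝ → ℝ)
    (V : ℝ → Matrix ι κ ℝ) (t : ℝ) :
    inverseFlow A l t * (B * (controlOfDriftFree A l V t)ᵀ + controlOfDriftFree A l V t * Bᵀ) *
        (inverseFlow A l t)ᵀ =
      NormedSpace.exp (t • -A) * B * (V t)ᵀ + V t * (NormedSpace.exp (t • -A) * B)ᵀ := by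
  set Ψ := inverseFlow A l t with hΨ
  set W := controlOfDriftFree A l V t
  have control : Ψ * W = Real.exp (l t) • V t := inverseFlow_mul_controlOfDriftFree V
  calc Ψ * (B * Wᵀ + W * Bᵀ) * Ψᵀ = Ψ * B * (Ψ * W)ᵀ + Ψ * W * (Ψ * B)ᵀ := by
        simp only [transpose_mul, Matrix.mul_add, Matrix.add_mul, Matrix.mul_assoc]
    _ = _ := by
        rw [control, hΨ, inverseFlow]
        simp [smul_smul, ← Real.exp_add]

lemma posDef_conj_iff {P Ψ : Matrix ι ι ℝ} (hΨ : IsUnit Ψ) : (Ψ * P * Ψᵀ).PosDef ↔ P.PosDef :=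
  hΨ.posDef_star_right_conjugate_iff

lemma IsCovarianceTrajectory.conj_eq_add {Y Q : ℝ → Matrix ι ι ℝ}
    (hS : IsCovarianceTrajectory A B M ν (fun t => U t + controlOfDriftFree A l V t) S)
    (hl : ∀ t ∈ Icc (0 : ℝ) 1, HasDerivWithinAt l (ν t) (Icc 0 1) t) (l_zero : l 0 = 0)
    (hY : ∀ t ∈ Icc (0 : ℝ) 1, HasDerivWithinAt Y
      (inverseFlow A l t * (B * (U t)ᵀ + U t * Bᵀ + M t) * (inverseFlow A l t)ᵀ) (Icc 0 1) t)
    (hSY : S 0 = Y 0) (hQ : IsCovarianceResponse (fun t => NormedSpace.exp (t • -A) * B) V Q)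
    (ht : t ∈ Icc 0 1) :
    inverseFlow A l t * S t * (inverseFlow A l t)ᵀ = Y t + Q t := by
  refine eqOn_Icc_of_hasDerivWithinAt
    (f := fun t => inverseFlow A l t * S t * (inverseFlow A l t)ᵀ) (g := fun t => Y t + Q t)
    (fun τ hτ => hS.hasDerivWithinAt_conj (hl τ hτ) hτ)
    (fun τ hτ => ((hY τ hτ).add (hQ.hasDerivAt τ).hasDerivWithinAt).congr_deriv ?_) ?_ ht
  · rw [← conj_controlOfDriftFree A B l V τ]
    simp only [transpose_add, Matrix.mul_add, Matrix.add_mul]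
    abel
  · simp [inverseFlow, l_zero, hSY, hQ.initial]

lemma KalmanControllable.exists_control_posDef (hAB : KalmanControllable A B)
    {Sig0 Sig1 : Matrix ι ι ℝ} (hSig0 : Sig0.PosDef) (hSig1 : Sig1.PosDef)
    (hM : ContinuousOn M (Icc 0 1)) (M_herm : ∀ t ∈ Icc (0 : ℝ) 1, (M t).IsHermitian)
    (l_zero : l 0 = 0) (hl : ∀ t ∈ Icc (0 : ℝ) 1, HasDerivWithinAt l (ν t) (Icc 0 1) t)
    (hU : ContinuousOn U (Icc 0 1)) :
    ∃ V : ℝ → Matrix ι κ ℝ, ContDiff ℝ ∞ V ∧ (∀ᶠ t in 𝓝 0, V t = 0) ∧ (∀ᶠ t in 𝓝 1, V t = 0) ∧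
      ∀ S, S 0 = Sig0 →
        IsCovarianceTrajectory A B M ν (fun t => U t + controlOfDriftFree A l V t) S →
        (∀ t ∈ Icc (0 : ℝ) 1, (S t).PosDef) ∧ S 1 = Sig1 := by
  let Ψ := inverseFlow A l
  let F (t : ℝ) : Matrix ι ι ℝ := Ψ t * (B * (U t)ᵀ + U t * Bᵀ + M t) * (Ψ t)ᵀ
  have F_continuous : ContinuousOn F (Icc 0 1) := by
    have Ψ_continuous : ContinuousOn Ψ (Icc 0 1) := fun t ht =>
      (hasDerivWithinAt_inverseFlow (hl t ht)).continuousWithinAt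
    fun_prop
  have F_herm (t : ℝ) (ht : t ∈ Icc 0 1) : (F t).IsHermitian := by
    refine isHermitian_mul_mul_conjTranspose _ (IsHermitian.add ?_ (M_herm t ht))
    simp [IsHermitian, conjTranspose_eq_transpose_of_trivial, add_comm]
  obtain ⟨Y, Y_zero, hY⟩ := exists_primitive_Icc F_continuous Sig0
  have Y_herm (t : ℝ) (ht : t ∈ Icc 0 1) : (Y t).IsHermitian :=
    isHermitian_of_hasDerivWithinAt hY F_herm (Y_zero ▸ hSig0.isHermitian) ht
  have b_smooth : ContDiff ℝ ∞ fun t : ℝ => NormedSpace.exp (t • -A) * B :=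
    contDiff_matrix_mul (contDiff_exp_smul (-A)) contDiff_const
  obtain ⟨V, Q, response, YQ_one, YQ_posDef⟩ :=
    hAB.totallyControllable_exp.exists_isCovarianceResponse_posDef_eq b_smooth
      (fun t ht => (hY t ht).continuousWithinAt) Y_herm (Y_zero ▸ hSig0)
      ((posDef_conj_iff isUnit_inverseFlow).2 hSig1 : (Ψ 1 * Sig1 * (Ψ 1)ᵀ).PosDef)
  refine ⟨V, response.contDiff_control, response.eventually_control_eq_zero_zero,
    response.eventually_control_eq_zero_one, fun S S_zero hS => ?_⟩
  have conj_S {t : ℝ} (ht : t ∈ Icc 0 1) : Ψ t * S t * (Ψ t)ᵀ = Y t + Q t :=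
    hS.conj_eq_add hl l_zero hY (S_zero.trans Y_zero.symm) response ht
  refine ⟨fun t ht => (posDef_conj_iff isUnit_inverseFlow).1 (conj_S ht ▸ YQ_posDef t ht), ?_⟩
  have conj_eq : Ψ 1 * S 1 * (Ψ 1)ᵀ = Ψ 1 * Sig1 * (Ψ 1)ᵀ := (conj_S (by simp)).trans YQ_one
  have Ψ_isUnit : IsUnit (Ψ 1) := isUnit_inverseFlow
  exact Ψ_isUnit.mul_left_cancel (((isUnit_transpose _).2 Ψ_isUnit).mul_right_cancel conj_eq)

end CovarianceEquation

/-! ### Prescribed jets at the end points -/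

section PrescribedJets

open Set Filter Topology
open scoped ContDiff Matrix.Norms.Operator

variable {ι κ : Type*} [Fintype ι] [Fintype κ]

lemma contDiffOn_matrix_iff {X : ℝ → Matrix ι κ ℝ} {s : Set ℝ} {k : ℕ∞ω} :
    ContDiffOn ℝ k X s ↔ ∀ i j, ContDiffOn ℝ k (fun t => X t i j) s := by
  let entries : Matrix ι κ ℝ ≃L[ℝ] (ι → κ → ℝ) :=
    (ofLinearEquiv ℝ).symm.toContinuousLinearEquiv
  rw [← entries.comp_contDiffOn_iff, contDiffOn_pi]
  exact forall_congr' fun _ => contDiffOn_pi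

lemma exists_contDiff_matrix_iteratedDeriv_eq_pair {x₀ x₁ : ℝ} (hx : x₀ ≠ x₁) (N : ℕ)
    (U0 U1 : ℕ → Matrix ι κ ℝ) :
    ∃ U : ℝ → Matrix ι κ ℝ, ContDiff ℝ ∞ U ∧ ∀ k ≤ N, ∀ i j,
      iteratedDeriv k (fun t => U t i j) x₀ = U0 k i j ∧
      iteratedDeriv k (fun t => U t i j) x₁ = U1 k i j := by
  choose f f_smooth hf using fun i j =>
    exists_contDiff_iteratedDeriv_eq_pair hx N (fun k => U0 k i j) (fun k => U1 k i j)
  exact ⟨fun t => of fun i j => f i j t,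
    contDiffOn_univ.1 (contDiffOn_matrix_iff.2 fun i j => (f_smooth i j).contDiffOn),
    fun k hk i j => hf i j k hk⟩

lemma iteratedDerivWithin_eq_iteratedDeriv_of_eventuallyEq {f g : ℝ → ℝ} {s : Set ℝ} {x : ℝ}
    {k : ℕ} (hs : UniqueDiffOn ℝ s) (hx : x ∈ s) (hg : ContDiff ℝ k g)
    (hfg : f =ᶠ[𝓝 x] g) : iteratedDerivWithin k f s x = iteratedDeriv k g x := by
  rw [← iteratedDerivWithin_eq_iteratedDeriv hs hg.contDiffAt hx]
  exact (hfg.filter_mono nhdsWithin_le_nhds).iteratedDerivWithin_eq hfg.self_of_nhds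

-- Truncated subtraction: for `H = 0` the class `C^(H - 1)` is `C^0`.
theorem stmt_16_general [DecidableEq ι] {A : Matrix ι ι ℝ} {B : Matrix ι κ ℝ}
    (hAB : KalmanControllable A B) (H : ℕ) {Sig0 Sig1 : Matrix ι ι ℝ} (hSig0 : Sig0.PosDef)
    (hSig1 : Sig1.PosDef) {M : ℝ → Matrix ι ι ℝ} {ν : ℝ → ℝ}
    (hM : ContinuousOn M (Icc 0 1)) (hM_herm : ∀ t ∈ Icc (0 : ℝ) 1, (M t).IsHermitian)
    (hν : ContDiffOn ℝ (H - 1 : ℕ) ν (Icc 0 1)) (U0 U1 : ℕ → Matrix ι κ ℝ) :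
    ∃ U : ℝ → Matrix ι κ ℝ,
      (∀ i j, ContDiffOn ℝ H (fun t => U t i j) (Icc 0 1)) ∧
      (∀ k ≤ H, ∀ i j,
        iteratedDerivWithin k (fun t => U t i j) (Icc 0 1) 0 = U0 k i j ∧
        iteratedDerivWithin k (fun t => U t i j) (Icc 0 1) 1 = U1 k i j) ∧
      ∀ S : ℝ → Matrix ι ι ℝ, S 0 = Sig0 → IsCovarianceTrajectory A B M ν U S →
        (∀ t ∈ Icc (0 : ℝ) 1, (S t).PosDef) ∧ S 1 = Sig1 := by
  have uniqueDiff := uniqueDiffOn_Icc (zero_lt_one (α := ℝ))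
  obtain ⟨l, l_zero, hl⟩ := exists_primitive_Icc hν.continuousOn 0
  have l_smooth : ContDiffOn ℝ H l (Icc 0 1) :=
    (contDiffOn_succ_of_hasDerivWithinAt uniqueDiff hl hν).of_le (by exact_mod_cast by lia)
  obtain ⟨Uh, Uh_smooth, Uh_jets⟩ :=
    exists_contDiff_matrix_iteratedDeriv_eq_pair zero_ne_one H U0 U1
  obtain ⟨V, V_smooth, V_zero, V_one, steers⟩ := hAB.exists_control_posDef hSig0 hSig1 hM hM_herm
    l_zero hl Uh_smooth.continuous.continuousOn
  let U (t : ℝ) : Matrix ι κ ℝ := Uh t + controlOfDriftFree A l V t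
  have U_smooth : ContDiffOn ℝ H U (Icc 0 1) :=
    (Uh_smooth.of_le (by exact_mod_cast le_top)).contDiffOn.add
      (contDiffOn_controlOfDriftFree l_smooth V_smooth)
  have jets {t₀ : ℝ} (ht₀ : t₀ ∈ Icc 0 1) (hV : ∀ᶠ t in 𝓝 t₀, V t = 0) (k : ℕ) (i : ι)
      (j : κ) : iteratedDerivWithin k (fun t => U t i j) (Icc 0 1) t₀ =
        iteratedDeriv k (fun t => Uh t i j) t₀ := by
    refine iteratedDerivWithin_eq_iteratedDeriv_of_eventuallyEq uniqueDiff ht₀ ?_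
      (hV.mono fun t ht => by simp [U, controlOfDriftFree, ht])
    exact contDiffOn_univ.1 (contDiffOn_matrix_iff.1
      (Uh_smooth.of_le (by exact_mod_cast le_top)).contDiffOn i j)
  refine ⟨U, contDiffOn_matrix_iff.1 U_smooth, fun k hk i j => ?_, steers⟩
  rw [jets (by simp) V_zero, jets (by simp) V_one]
  exact Uh_jets k hk i j

end PrescribedJets

theorem stmt_16 {n p : ℕ} (hn : 1 ≤ n) (hp : 1 ≤ p)
    (A : Matrix (Fin n) (Fin n) ℝ) (B : Matrix (Fin n) (Fin p) ℝ)
    (hctrb : (ctrbConstMat A B).rank = n)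
    (H : ℕ)
    (Sig0 Sig1 : Matrix (Fin n) (Fin n) ℝ) (hSig0 : Sig0.PosDef) (hSig1 : Sig1.PosDef)
    (M : ℝ → Matrix (Fin n) (Fin n) ℝ) (ν : ℝ → ℝ)
    (hM : ∀ i j, ContDiffOn ℝ (H + n - 1 : ℕ) (fun t => M t i j) (Set.Icc 0 1))
    (hν : ContDiffOn ℝ (H + n - 1 : ℕ) ν (Set.Icc 0 1))
    (hMpsd : ∀ t ∈ Set.Icc (0:ℝ) 1, (M t).PosSemidef)
    (hνpos : ∀ t ∈ Set.Icc (0:ℝ) 1, 0 ≤ ν t)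
    (U0 U1 : ℕ → Matrix (Fin n) (Fin p) ℝ) :
    ∃ U : ℝ → Matrix (Fin n) (Fin p) ℝ,
      (∀ i j, ContDiffOn ℝ (H : ℕ) (fun t => U t i j) (Set.Icc 0 1)) ∧
      (∀ k ≤ H, ∀ i j,
        iteratedDerivWithin k (fun t => U t i j) (Set.Icc 0 1) 0 = U0 k i j ∧
        iteratedDerivWithin k (fun t => U t i j) (Set.Icc 0 1) 1 = U1 k i j) ∧
      ∀ S : ℝ → Matrix (Fin n) (Fin n) ℝ, S 0 = Sig0 →
        (∀ t ∈ Set.Icc (0:ℝ) 1, ∀ (i j : Fin n),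
          HasDerivWithinAt (fun τ : ℝ => S τ i j)
            ((A * S t + S t * Aᵀ + B * (U t)ᵀ + U t * Bᵀ + M t + (2 * ν t) • S t) i j)
            (Set.Icc (0:ℝ) 1) t) →
        (∀ t ∈ Set.Icc (0:ℝ) 1, (S t).PosDef) ∧ S 1 = Sig1 := by
  obtain ⟨U, U_smooth, U_jets, steers⟩ := stmt_16_general
    (kalmanControllable_of_rank_ctrbConstMat hctrb) H hSig0 hSig1
    (continuousOn_pi.2 fun i => continuousOn_pi.2 fun j => (hM i j).continuousOn)
    (fun t ht => (hMpsd t ht).isHermitian) (hν.of_le (by exact_mod_cast by lia)) U0 U1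
  exact ⟨U, U_smooth, U_jets, fun S S_zero hS =>
    steers S S_zero fun t ht => hasDerivWithinAt_matrix_iff.2 (hS t ht)⟩
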